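/- arXiv:1803.06339 — 7 statements merged into one kernel-verified Lean document; each statement's English description precedes it below -/
import Mathlib

section
/- (Abstract form of Theorem 3.8, well-posedness for a possibly nonsymmetric form.) For every F ∈ X' there exists a unique u ∈ V such that b(u, v) = F(v) for all v ∈ X, and this solution satisfies the a priori estimate ‖u‖_V ≤ c_s⁻¹ ‖F‖_{X'}, where c_s = √2·γ / (2·(1 + Γ²)). -/
open scoped InnerProductSpace

/-!
Along the segment `A_t = A₀ + t (A - A₀)` of coercive forms, testing `D u + A_t (ι u)` with `ι u`
and using `0 ≤ ⟨D u, ι u⟩` bounds `‖ι u‖` by `‖D u + A_t (ι u)‖`, uniformly in `t`. The method of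
continuity therefore carries surjectivity from `D + A₀ ∘ ι` to `D + A ∘ ι`. At `t = 1` the same
bound also controls `‖D u‖ ≤ ‖D u + A (ι u)‖ + ‖A‖ ‖ι u‖`, which is the a priori estimate and gives
uniqueness.
-/

open Function

section Continuation

variable {V Y : Type*} [AddCommGroup V] [NormedAddCommGroup Y] [CompleteSpace Y]

/- For a linear right inverse `G` of `L`, `(L + P) ∘ G = 1 + P ∘ G` is invertible by the Neumann
series. -/
theorem surjective_add_of_norm_le_mul {𝕜 : Type*} [NontriviallyNormedField 𝕜] [Module 𝕜 V]
    [NormedSpace 𝕜 Y] {L P : V →ₗ[𝕜] Y} {k : ℝ} (hk : k < 1) (hP : ∀ u, ‖P u‖ ≤ k * ‖L u‖)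
    (hL : Surjective L) : Surjective (L + P) := by
  obtain ⟨G, hG⟩ := L.exists_rightInverse_of_surjective (LinearMap.range_eq_top.2 hL)
  have hLG (y : Y) : L (G y) = y := LinearMap.congr_fun hG y
  let Q : Y →L[𝕜] Y := (P ∘ₗ G).mkContinuous k fun y ↦ by simpa [hLG] using hP (G y)
  have hQ : ‖-Q‖ < 1 :=
    (norm_neg Q).trans_lt <| (LinearMap.mkContinuous_norm_le' _ _).trans_lt <| by simpa using hk
  obtain ⟨R, hR⟩ := (isUnit_one_sub_of_norm_lt_one hQ).exists_right_inv
  refine fun y ↦ ⟨G (R y), ?_⟩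
  calc (L + P) (G (R y)) = R y + P (G (R y)) := by rw [LinearMap.add_apply, hLG]
    _ = ((1 - -Q) * R) y := by simp [Q]
    _ = y := by rw [hR, one_apply_eq_self]

theorem surjective_add_of_norm_le_mul_segment [Module ℝ V] [NormedSpace ℝ Y]
    {L P : V →ₗ[ℝ] Y} {K : ℝ}
    (hK : ∀ t ∈ Set.Icc (0 : ℝ) 1, ∀ u, ‖P u‖ ≤ K * ‖(L + t • P) u‖) (hL : Surjective L) :
    Surjective (L + P) := by
  obtain ⟨n, hKn⟩ := exists_nat_gt (max K 0)
  have hn : (0 : ℝ) < n := (le_max_right K 0).trans_lt hKn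
  have surjective_grid (j : ℕ) (hj : j ≤ n) : Surjective (L + (j / n : ℝ) • P) := by
    induction j with
    | zero => simpa using hL
    | succ j ih =>
      have hjn : (j / n : ℝ) ∈ Set.Icc (0 : ℝ) 1 :=
        ⟨by positivity, div_le_one_of_le₀ (mod_cast (Nat.le_succ j).trans hj) hn.le⟩
      have hsplit : L + ((j + 1 : ℕ) / n : ℝ) • P = (L + (j / n : ℝ) • P) + (1 / n : ℝ) • P := by
        rw [add_assoc, ← add_smul, ← add_div, Nat.cast_succ]
      rw [hsplit]
      refine surjective_add_of_norm_le_mul (k := K / n)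
        ((div_lt_one hn).2 ((le_max_left K 0).trans_lt hKn)) (fun u ↦ ?_)
        (ih ((Nat.le_succ j).trans hj))
      calc ‖((1 / n : ℝ) • P) u‖ = ‖P u‖ / n := by
            rw [LinearMap.smul_apply, norm_smul, Real.norm_of_nonneg (by positivity),
              one_div_mul_eq_div]
        _ ≤ K * ‖(L + (j / n : ℝ) • P) u‖ / n := by gcongr; exact hK _ hjn u
        _ = K / n * ‖(L + (j / n : ℝ) • P) u‖ := by ring
  simpa [hn.ne'] using surjective_grid n le_rfl

end Continuation

section Estimates

variable {X : Type*} [SeminormedAddCommGroup X] [NormedSpace ℝ X]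

theorem mul_norm_le_norm_of_mul_norm_sq_le_apply {f : StrongDual ℝ X} {x : X} {γ : ℝ}
    (h : γ * ‖x‖ ^ 2 ≤ f x) : γ * ‖x‖ ≤ ‖f‖ := by
  rcases (norm_nonneg x).eq_or_lt with hx | hx
  · simp [← hx]
  · refine le_of_mul_le_mul_right ?_ hx
    calc γ * ‖x‖ * ‖x‖ = γ * ‖x‖ ^ 2 := by ring
      _ ≤ ‖f x‖ := h.trans (Real.le_norm_self _)
      _ ≤ ‖f‖ * ‖x‖ := f.le_opNorm x

theorem mul_norm_le_norm_add_of_apply_nonneg {f g : StrongDual ℝ X} {x : X} {γ : ℝ}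
    (hf : 0 ≤ f x) (hg : γ * ‖x‖ ^ 2 ≤ g x) : γ * ‖x‖ ≤ ‖f + g‖ :=
  mul_norm_le_norm_of_mul_norm_sq_le_apply (hg.trans (le_add_of_nonneg_left hf))

theorem mul_norm_sq_add_le_of_apply_nonneg {f g : StrongDual ℝ X} {x : X} {γ Γ : ℝ}
    (hγ : 0 ≤ γ) (hΓ : 0 ≤ Γ) (hf : 0 ≤ f x) (hg : γ * ‖x‖ ^ 2 ≤ g x) (hgx : ‖g‖ ≤ Γ * ‖x‖) :
    γ ^ 2 * (‖x‖ ^ 2 + ‖f‖ ^ 2) ≤ (1 + (γ + Γ) ^ 2) * ‖f + g‖ ^ 2 := by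
  have hx : γ * ‖x‖ ≤ ‖f + g‖ := mul_norm_le_norm_add_of_apply_nonneg hf hg
  have hfx : γ * ‖f‖ ≤ (γ + Γ) * ‖f + g‖ :=
    calc γ * ‖f‖ ≤ γ * (‖f + g‖ + ‖g‖) := by gcongr; exact norm_le_add_norm_add f g
      _ ≤ γ * (‖f + g‖ + Γ * ‖x‖) := by gcongr
      _ = γ * ‖f + g‖ + Γ * (γ * ‖x‖) := by ring
      _ ≤ γ * ‖f + g‖ + Γ * ‖f + g‖ := by gcongr
      _ = (γ + Γ) * ‖f + g‖ := by ring
  calc γ ^ 2 * (‖x‖ ^ 2 + ‖f‖ ^ 2) = (γ * ‖x‖) ^ 2 + (γ * ‖f‖) ^ 2 := by ring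
    _ ≤ ‖f + g‖ ^ 2 + ((γ + Γ) * ‖f + g‖) ^ 2 := by gcongr
    _ = (1 + (γ + Γ) ^ 2) * ‖f + g‖ ^ 2 := by ring

theorem sqrt_norm_sq_add_le_of_apply_nonneg {f g : StrongDual ℝ X} {x : X} {γ Γ : ℝ} (hγ : 0 < γ)
    (hγΓ : γ ≤ Γ) (hf : 0 ≤ f x) (hg : γ * ‖x‖ ^ 2 ≤ g x) (hgx : ‖g‖ ≤ Γ * ‖x‖) :
    √(‖x‖ ^ 2 + ‖f‖ ^ 2) ≤ (√2 * γ / (2 * (1 + Γ ^ 2)))⁻¹ * ‖f + g‖ := by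
  have hΓ : 0 ≤ Γ := hγ.le.trans hγΓ
  have hconst : 1 + (γ + Γ) ^ 2 ≤ 2 * (1 + Γ ^ 2) ^ 2 :=
    calc 1 + (γ + Γ) ^ 2 ≤ 1 + (Γ + Γ) ^ 2 := by gcongr
      _ ≤ 2 * (1 + Γ ^ 2) ^ 2 := by linarith [sq_nonneg (Γ ^ 2)]
  have hinv : γ ^ 2 * (√2 * γ / (2 * (1 + Γ ^ 2)))⁻¹ ^ 2 = 2 * (1 + Γ ^ 2) ^ 2 := by
    rw [inv_div, div_pow, mul_pow, mul_pow, Real.sq_sqrt zero_le_two]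
    field_simp
  refine Real.sqrt_le_iff.2 ⟨by positivity, le_of_mul_le_mul_left ?_ (pow_pos hγ 2)⟩
  calc γ ^ 2 * (‖x‖ ^ 2 + ‖f‖ ^ 2) ≤ (1 + (γ + Γ) ^ 2) * ‖f + g‖ ^ 2 :=
        mul_norm_sq_add_le_of_apply_nonneg hγ.le hΓ hf hg hgx
    _ ≤ 2 * (1 + Γ ^ 2) ^ 2 * ‖f + g‖ ^ 2 := by gcongr
    _ = γ ^ 2 * ((√2 * γ / (2 * (1 + Γ ^ 2)))⁻¹ * ‖f + g‖) ^ 2 := by rw [← hinv]; ring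

theorem exists_mul_norm_sq_le_segment_of_isCoercive {A₀ A : X →L[ℝ] StrongDual ℝ X}
    (hA₀ : IsCoercive A₀) (hA : IsCoercive A) :
    ∃ γ > 0, ∀ t ∈ Set.Icc (0 : ℝ) 1, ∀ x, γ * ‖x‖ ^ 2 ≤ (A₀ + t • (A - A₀)) x x := by
  obtain ⟨γ₀, hγ₀, hA₀⟩ := hA₀
  obtain ⟨γ₁, hγ₁, hA⟩ := hA
  refine ⟨min γ₀ γ₁, lt_min hγ₀ hγ₁, fun t ⟨ht₀, ht₁⟩ x ↦ ?_⟩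
  have hmin₀ : min γ₀ γ₁ * ‖x‖ ^ 2 ≤ A₀ x x :=
    calc min γ₀ γ₁ * ‖x‖ ^ 2 ≤ γ₀ * ‖x‖ ^ 2 := by gcongr; exact min_le_left _ _
      _ = γ₀ * ‖x‖ * ‖x‖ := by ring
      _ ≤ A₀ x x := hA₀ x
  have hmin₁ : min γ₀ γ₁ * ‖x‖ ^ 2 ≤ A x x :=
    calc min γ₀ γ₁ * ‖x‖ ^ 2 ≤ γ₁ * ‖x‖ ^ 2 := by gcongr; exact min_le_right _ _
      _ = γ₁ * ‖x‖ * ‖x‖ := by ring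
      _ ≤ A x x := hA x
  calc min γ₀ γ₁ * ‖x‖ ^ 2 = (1 - t) * (min γ₀ γ₁ * ‖x‖ ^ 2) + t * (min γ₀ γ₁ * ‖x‖ ^ 2) := by
        ring
    _ ≤ (1 - t) * A₀ x x + t * A x x := by gcongr
    _ = (A₀ + t • (A - A₀)) x x := by
      simp only [add_apply, smul_apply, sub_apply, smul_eq_mul]
      ring

end Estimates

section CoercivePerturbation

variable {X : Type*} [NormedAddCommGroup X] [NormedSpace ℝ X]

theorem surjective_add_of_isCoercive {V : Type*} [AddCommGroup V] [Module ℝ V] {ι : V →ₗ[ℝ] X}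
    {D : V →ₗ[ℝ] StrongDual ℝ X} (hD : ∀ u, 0 ≤ D u (ι u)) {A₀ A : X →L[ℝ] StrongDual ℝ X}
    (hA₀ : IsCoercive A₀) (hA : IsCoercive A) (hsurj : Surjective fun u ↦ D u + A₀ (ι u)) :
    Surjective fun u ↦ D u + A (ι u) := by
  obtain ⟨γ, hγ, hcoercive⟩ := exists_mul_norm_sq_le_segment_of_isCoercive hA₀ hA
  let L : V →ₗ[ℝ] StrongDual ℝ X := D + A₀ ∘ₗ ι
  let P : V →ₗ[ℝ] StrongDual ℝ X := (A - A₀) ∘ₗ ι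
  have hLP (t : ℝ) (u : V) : (L + t • P) u = D u + (A₀ + t • (A - A₀)) (ι u) := add_assoc _ _ _
  have hbound : ∀ t ∈ Set.Icc (0 : ℝ) 1, ∀ u, ‖P u‖ ≤ ‖A - A₀‖ / γ * ‖(L + t • P) u‖ := by
    intro t ht u
    have hu : γ * ‖ι u‖ ≤ ‖(L + t • P) u‖ := by
      rw [hLP]
      exact mul_norm_le_norm_add_of_apply_nonneg (hD u) (hcoercive t ht (ι u))
    calc ‖P u‖ ≤ ‖A - A₀‖ * ‖ι u‖ := (A - A₀).le_opNorm (ι u)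
      _ = ‖A - A₀‖ / γ * (γ * ‖ι u‖) := by field_simp
      _ ≤ ‖A - A₀‖ / γ * ‖(L + t • P) u‖ := by gcongr
  intro F
  obtain ⟨u, hu⟩ := surjective_add_of_norm_le_mul_segment hbound hsurj F
  exact ⟨u, by simpa [L, P] using hu⟩

theorem wellposedness_nonsymmetric_general {V : Type*} [NormedAddCommGroup V] [Module ℝ V]
    (ι : V →ₗ[ℝ] X) (D : V →ₗ[ℝ] StrongDual ℝ X)
    (hnormV : ∀ u : V, ‖u‖ = √(‖ι u‖ ^ 2 + ‖D u‖ ^ 2))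
    {γ Γ : ℝ} (hγ : 0 < γ) (hγΓ : γ ≤ Γ) {A₀ A : X →L[ℝ] StrongDual ℝ X}
    (hA : ‖A‖ ≤ Γ) (hAell : ∀ x, γ * ‖x‖ ^ 2 ≤ A x x) (hDpos : ∀ u, 0 ≤ D u (ι u))
    (hA₀ : IsCoercive A₀) (hsurj : Surjective fun u ↦ D u + A₀ (ι u)) (F : StrongDual ℝ X) :
    ∃ u : V, (∀ v, D u v + A (ι u) v = F v) ∧
      ‖u‖ ≤ (√2 * γ / (2 * (1 + Γ ^ 2)))⁻¹ * ‖F‖ ∧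
      ∀ u' : V, (∀ v, D u' v + A (ι u') v = F v) → u' = u := by
  have hcoercive : IsCoercive A := ⟨γ, hγ, fun x ↦ by simpa [sq, mul_assoc] using hAell x⟩
  have hestimate (u : V) : ‖u‖ ≤ (√2 * γ / (2 * (1 + Γ ^ 2)))⁻¹ * ‖D u + A (ι u)‖ := by
    rw [hnormV]
    exact sqrt_norm_sq_add_le_of_apply_nonneg hγ hγΓ (hDpos u) (hAell (ι u))
      (A.le_of_opNorm_le hA (ι u))
  obtain ⟨u, rfl⟩ := surjective_add_of_isCoercive hDpos hA₀ hcoercive hsurj F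
  refine ⟨u, fun v ↦ rfl, hestimate u, fun u' hu' ↦ sub_eq_zero.1 (norm_le_zero_iff.1 ?_)⟩
  have hdiff : D (u' - u) + A (ι (u' - u)) = 0 := by
    ext v
    simpa [sub_add_sub_comm, sub_eq_zero] using hu' v
  simpa only [hdiff, norm_zero, mul_zero] using hestimate (u' - u)

end CoercivePerturbation

section Riesz

variable {X : Type*} [NormedAddCommGroup X] [InnerProductSpace ℝ X]

theorem isCoercive_smul_innerSL {c : ℝ} (hc : 0 < c) : IsCoercive (c • innerSL ℝ (E := X)) :=
  ⟨c, hc, fun x ↦ Eq.le <|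
    calc c * ‖x‖ * ‖x‖ = c * ⟪x, x⟫_ℝ := by rw [mul_assoc, real_inner_self_eq_norm_mul_norm]
      _ = (c • innerSL ℝ (E := X)) x x := rfl⟩

theorem surjective_add_smul_innerSL [CompleteSpace X] {V : Type*} {ι : V → X}
    {D : V → StrongDual ℝ X} {c : ℝ} (hc : c ≠ 0)
    (h : ∀ x : X, ∃ z : V, ∀ w : X, D z w + c * ⟪ι z, w⟫_ℝ = c * ⟪x, w⟫_ℝ) :
    Surjective fun u ↦ D u + (c • innerSL ℝ (E := X)) (ι u) := by
  intro F
  obtain ⟨z, hz⟩ := h (c⁻¹ • (InnerProductSpace.toDual ℝ X).symm F)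
  refine ⟨z, ContinuousLinearMap.ext fun w ↦ (hz w).trans ?_⟩
  rw [real_inner_smul_left, InnerProductSpace.toDual_symm_apply, mul_inv_cancel_left₀ hc]

end Riesz

/-- Abstract form of Theorem 3.8: well-posedness of `b(u,v) = F(v)` for a possibly
nonsymmetric bilinear form, with the a priori estimate `‖u‖_V ≤ c_s⁻¹ ‖F‖_{X'}`,
`c_s = √2·γ / (2·(1 + Γ²))`. -/
theorem wellposedness_nonsymmetric
    {X : Type*} [NormedAddCommGroup X] [InnerProductSpace ℝ X] [CompleteSpace X]
    {V : Type*} [NormedAddCommGroup V] [NormedSpace ℝ V] [CompleteSpace V]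
    (ι : V →ₗ[ℝ] X) (hι : Function.Injective ι)
    (D : V →ₗ[ℝ] (X →L[ℝ] ℝ))
    (hnormV : ∀ u : V, ‖u‖ = Real.sqrt (‖ι u‖ ^ 2 + ‖D u‖ ^ 2))
    (γ Γ : ℝ) (hγ : 0 < γ) (hγΓ : γ ≤ Γ)
    (A : X →ₗ[ℝ] X →ₗ[ℝ] ℝ)
    (hAbdd : ∀ x y : X, |A x y| ≤ Γ * ‖x‖ * ‖y‖)
    (hAell : ∀ x : X, γ * ‖x‖ ^ 2 ≤ A x x)
    (hDpos : ∀ u : V, 0 ≤ D u (ι u))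
    (haux : ∀ x : X, ∃ z : V,
      ∀ w : X, D z w + Γ * ⟪ι z, w⟫_ℝ = Γ * ⟪x, w⟫_ℝ) :
    ∀ F : X →L[ℝ] ℝ, ∃ u : V,
      (∀ v : X, D u v + A (ι u) v = F v) ∧
      ‖u‖ ≤ (Real.sqrt 2 * γ / (2 * (1 + Γ ^ 2)))⁻¹ * ‖F‖ ∧
      (∀ u' : V, (∀ v : X, D u' v + A (ι u') v = F v) → u' = u) := by
  have hΓ : 0 < Γ := hγ.trans_le hγΓ
  exact wellposedness_nonsymmetric_general ι D hnormV hγ hγΓ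
    (A.mkContinuous₂_norm_le hΓ.le hAbdd) hAell hDpos (isCoercive_smul_innerSL hΓ)
    (surjective_add_smul_innerSL hΓ.ne' haux)
end

section
/- (Abstract form of Lemma 3.4, inf-sup inequality.) For every u ∈ V with u ≠ 0 there exists v ∈ X with v ≠ 0 such that b(u, v) ≥ c_s ‖u‖_V ‖v‖_X, where c_s := √2·γ / (2·(1 + Γ²)); equivalently, the inf-sup inequality inf_{0≠u∈V} sup_{0≠v∈X} b(u, v)/(‖u‖_V ‖v‖_X) ≥ c_s holds. -/
open scoped RealInnerProductSpace

/-!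
Fix `u` and let `F` be the continuous functional `b(u, ·)` on `X`. Positivity of `D` and ellipticity
of `A` give `γ ‖ι u‖ ≤ ‖F‖`, and then `‖D u‖ ≤ ‖F‖ + Γ ‖ι u‖` is controlled by `‖F‖` too; together,
`γ / √(1 + (γ + Γ)²) * ‖u‖_V ≤ ‖F‖`. The constant `√2 γ / (2 (1 + Γ²))` is strictly smaller than
this one, so it is enough that `v` almost realizes the dual norm of `F`.
-/

section Functional

variable {X : Type*} [SeminormedAddCommGroup X] [NormedSpace ℝ X]

lemma mul_norm_le_opNorm_of_mul_sq_norm_le_apply {F : X →L[ℝ] ℝ} {x : X} {γ : ℝ}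
    (h : γ * ‖x‖ ^ 2 ≤ F x) : γ * ‖x‖ ≤ ‖F‖ := by
  rcases (norm_nonneg x).eq_or_lt with hx | hx
  · simp [← hx]
  · refine le_of_mul_le_mul_right ?_ hx
    calc γ * ‖x‖ * ‖x‖ = γ * ‖x‖ ^ 2 := by ring
      _ ≤ F x := h
      _ ≤ ‖F‖ * ‖x‖ := (le_abs_self _).trans (F.le_opNorm x)

lemma exists_mul_norm_lt_apply_of_lt_opNorm {F : X →L[ℝ] ℝ} {c : ℝ} (hc : 0 ≤ c) (hcF : c < ‖F‖) :
    ∃ v : X, c * ‖v‖ < F v := by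
  by_contra! h
  refine hcF.not_ge (F.opNorm_le_bound hc fun v => abs_le'.2 ⟨h v, ?_⟩)
  simpa using h (-v)

end Functional

section NormEstimate

variable {E G : Type*} [SeminormedAddCommGroup E] [SeminormedAddCommGroup G]
  {x : E} {f a : G} {γ Γ : ℝ}

lemma mul_norm_le_mul_norm_add (hγ : 0 ≤ γ) (hΓ : 0 ≤ Γ) (hx : γ * ‖x‖ ≤ ‖f + a‖)
    (ha : ‖a‖ ≤ Γ * ‖x‖) : γ * ‖f‖ ≤ (γ + Γ) * ‖f + a‖ :=
  calc γ * ‖f‖ ≤ γ * (‖f + a‖ + Γ * ‖x‖) := by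
        gcongr
        exact (norm_le_add_norm_add f a).trans (by gcongr)
    _ = γ * ‖f + a‖ + Γ * (γ * ‖x‖) := by ring
    _ ≤ γ * ‖f + a‖ + Γ * ‖f + a‖ := by gcongr
    _ = (γ + Γ) * ‖f + a‖ := by ring

lemma div_sqrt_mul_sqrt_le_norm_add (hγ : 0 ≤ γ) (hΓ : 0 ≤ Γ) (hx : γ * ‖x‖ ≤ ‖f + a‖)
    (ha : ‖a‖ ≤ Γ * ‖x‖) :
    γ / √(1 + (γ + Γ) ^ 2) * √(‖x‖ ^ 2 + ‖f‖ ^ 2) ≤ ‖f + a‖ := by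
  have hf := mul_norm_le_mul_norm_add hγ hΓ hx ha
  rw [div_mul_eq_mul_div, div_le_iff₀ (by positivity)]
  refine (sq_le_sq₀ (by positivity) (by positivity)).1 ?_
  calc (γ * √(‖x‖ ^ 2 + ‖f‖ ^ 2)) ^ 2 = (γ * ‖x‖) ^ 2 + (γ * ‖f‖) ^ 2 := by
        rw [mul_pow, Real.sq_sqrt (by positivity)]; ring
    _ ≤ ‖f + a‖ ^ 2 + ((γ + Γ) * ‖f + a‖) ^ 2 := by gcongr
    _ = (‖f + a‖ * √(1 + (γ + Γ) ^ 2)) ^ 2 := by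
        rw [mul_pow ‖f + a‖ √_, Real.sq_sqrt (by positivity)]; ring

end NormEstimate

lemma sqrt_two_mul_div_lt_div_sqrt {γ Γ : ℝ} (hγ : 0 < γ) (hγΓ : γ ≤ Γ) :
    √2 * γ / (2 * (1 + Γ ^ 2)) < γ / √(1 + (γ + Γ) ^ 2) := by
  have hΓ : 0 < Γ := hγ.trans_le hγΓ
  have hsq : 1 + (γ + Γ) ^ 2 < (√2 * (1 + Γ ^ 2)) ^ 2 :=
    calc 1 + (γ + Γ) ^ 2 ≤ 1 + (Γ + Γ) ^ 2 := by gcongr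
      _ < 2 * (1 + Γ ^ 2) ^ 2 := by nlinarith [sq_nonneg (Γ ^ 2)]
      _ = (√2 * (1 + Γ ^ 2)) ^ 2 := by rw [mul_pow, Real.sq_sqrt zero_le_two]
  calc √2 * γ / (2 * (1 + Γ ^ 2)) = γ / (√2 * (1 + Γ ^ 2)) := by
        rw [div_eq_div_iff (by positivity) (by positivity)]
        linear_combination γ * (1 + Γ ^ 2) * Real.mul_self_sqrt zero_le_two
    _ < γ / √(1 + (γ + Γ) ^ 2) := by
        gcongr
        exact (Real.sqrt_lt' (by positivity)).2 hsq

theorem infsup_inequality_general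
    {X : Type*} [SeminormedAddCommGroup X] [NormedSpace ℝ X] {V : Type*}
    (ι : V → X) (D : V → X →L[ℝ] ℝ) {γ Γ : ℝ} (hγ : 0 < γ) (hγΓ : γ ≤ Γ)
    (A : X → X →ₗ[ℝ] ℝ)
    (hAbdd : ∀ x y : X, |A x y| ≤ Γ * ‖x‖ * ‖y‖)
    (hAell : ∀ x : X, γ * ‖x‖ ^ 2 ≤ A x x)
    (hDpos : ∀ u : V, 0 ≤ D u (ι u)) (u : V) (hu : √(‖ι u‖ ^ 2 + ‖D u‖ ^ 2) ≠ 0) :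
    ∃ v : X, v ≠ 0 ∧
      √2 * γ / (2 * (1 + Γ ^ 2)) * (√(‖ι u‖ ^ 2 + ‖D u‖ ^ 2) * ‖v‖) ≤ D u v + A (ι u) v := by
  have hΓ : 0 ≤ Γ := hγ.le.trans hγΓ
  let a : X →L[ℝ] ℝ := (A (ι u)).mkContinuous (Γ * ‖ι u‖) (hAbdd (ι u))
  have ha : ‖a‖ ≤ Γ * ‖ι u‖ := LinearMap.mkContinuous_norm_le _ (by positivity) _
  have hιu : γ * ‖ι u‖ ≤ ‖D u + a‖ :=
    mul_norm_le_opNorm_of_mul_sq_norm_le_apply <|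
      (hAell (ι u)).trans (le_add_of_nonneg_left (hDpos u))
  have hlt : √2 * γ / (2 * (1 + Γ ^ 2)) * √(‖ι u‖ ^ 2 + ‖D u‖ ^ 2) < ‖D u + a‖ :=
    (mul_lt_mul_of_pos_right (sqrt_two_mul_div_lt_div_sqrt hγ hγΓ) (by positivity)).trans_le
      (div_sqrt_mul_sqrt_le_norm_add hγ.le hΓ hιu ha)
  obtain ⟨v, hv⟩ := exists_mul_norm_lt_apply_of_lt_opNorm (by positivity) hlt
  refine ⟨v, ?_, (mul_assoc _ _ _).symm.trans_le hv.le⟩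
  rintro rfl
  simp at hv

/-- Abstract form of Lemma 3.4 (inf-sup inequality): for every `u ∈ V`, `u ≠ 0`,
there is `v ∈ X`, `v ≠ 0` with `b(u,v) ≥ c_s ‖u‖_V ‖v‖_X`,
where `c_s = √2·γ / (2·(1 + Γ²))`. -/
theorem infsup_inequality
    {X : Type*} [NormedAddCommGroup X] [InnerProductSpace ℝ X] [CompleteSpace X]
    {V : Type*} [AddCommGroup V] [Module ℝ V]
    (ι : V →ₗ[ℝ] X) (hι : Function.Injective ι)
    (D : V →ₗ[ℝ] (X →L[ℝ] ℝ))
    (γ Γ : ℝ) (hγ : 0 < γ) (hγΓ : γ ≤ Γ)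
    (A : X →ₗ[ℝ] X →ₗ[ℝ] ℝ)
    (hAbdd : ∀ x y : X, |A x y| ≤ Γ * ‖x‖ * ‖y‖)
    (hAell : ∀ x : X, γ * ‖x‖ ^ 2 ≤ A x x)
    (hDpos : ∀ u : V, 0 ≤ D u (ι u)) :
    ∀ u : V, u ≠ 0 → ∃ v : X, v ≠ 0 ∧
      Real.sqrt 2 * γ / (2 * (1 + Γ ^ 2)) *
          (Real.sqrt (‖ι u‖ ^ 2 + ‖D u‖ ^ 2) * ‖v‖)
        ≤ D u v + A (ι u) v := by
  intro u hu
  have hιu : ι u ≠ 0 := (map_ne_zero_iff ι hι).2 hu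
  exact infsup_inequality_general ι D hγ hγΓ A hAbdd hAell hDpos u (by positivity)
end

section
/- (Abstract form of Lemma 3.5, injectivity of the adjoint in the symmetric case.) If v ∈ X satisfies b(u, v) = 0 for all u ∈ V, then v = 0. -/
open scoped InnerProductSpace

/-!
Let `M = Γ • ⟪·, ·⟫` and test `b` with the solution `z` of `⟨D z, ·⟩ + M(ι z, ·) = M(v, ·)`. Writing
`z` also for `ι z`, nonnegativity of `⟨D z, z⟩` makes the solution operator an `M`-contraction,
`M(z, z) ≤ M(v, v)`, while `b(z, v) = 0` turns into `(M - A)(z, v) = M(v, v)`. The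
arithmetic-geometric mean inequality for the positive semidefinite form `M - A` gives
`A(z, z) + A(v, v) ≤ M(z, z) - M(v, v) ≤ 0`, so `v = 0` because `A` is positive definite.
-/

section BilinForm

open LinearMap (BilinForm)

variable {R X : Type*} [CommRing R] [LinearOrder R] [IsStrictOrderedRing R]
  [AddCommGroup X] [Module R X] {A M : BilinForm R X}

theorem two_mul_bilinForm_apply_le_add (hM : M.IsPosSemidef) (x y : X) :
    2 * M x y ≤ M x x + M y y := by
  have h_expand : M (x - y) (x - y) = M x x - 2 * M x y + M y y := by
    simp only [map_sub, LinearMap.sub_apply, hM.isSymm.eq y x]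
    ring
  linarith [hM.isNonneg.nonneg (x - y)]

theorem bilinForm_apply_self_le_of_apply_self_le_apply (hM : M.IsPosSemidef) {x y : X}
    (h : M x x ≤ M x y) : M x x ≤ M y y := by
  linarith [two_mul_bilinForm_apply_le_add hM x y]

theorem bilinForm_add_apply_self_le_sub_of_sub_apply_eq (hMA : (M - A).IsPosSemidef) {x y : X}
    (h : (M - A) x y = M y y) : A x x + A y y ≤ M x x - M y y := by
  have h_amgm := two_mul_bilinForm_apply_le_add hMA x y
  rw [h] at h_amgm
  simp only [LinearMap.sub_apply] at h_amgm
  linarith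

theorem adjoint_injective_symmetric_general {V : Type*} (ι : V → X) (D : V → X → R)
    (hA_symm : A.IsSymm) (hA_pos : ∀ x, x ≠ 0 → 0 < A x x)
    (hM_symm : M.IsSymm) (hAM : ∀ x, A x x ≤ M x x)
    (hD : ∀ u, 0 ≤ D u (ι u)) (v : X)
    (haux : ∃ z, ∀ w, D z w + M (ι z) w = M v w)
    (hv : ∀ u, D u v + A (ι u) v = 0) :
    v = 0 := by
  have hA_nonneg (x : X) : 0 ≤ A x x := by
    obtain rfl | hx := eq_or_ne x 0
    · simp
    · exact (hA_pos x hx).le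
  have hM : M.IsPosSemidef := ⟨hM_symm, ⟨fun x ↦ (hA_nonneg x).trans (hAM x)⟩⟩
  have hMA : (M - A).IsPosSemidef := ⟨hM_symm.sub hA_symm, ⟨fun x ↦ sub_nonneg.2 (hAM x)⟩⟩
  obtain ⟨z, hz⟩ := haux
  have h_contract : M (ι z) (ι z) ≤ M v v := by
    apply bilinForm_apply_self_le_of_apply_self_le_apply hM
    linarith [hz (ι z), hD z, hM_symm.eq v (ι z)]
  have h_defect : (M - A) (ι z) v = M v v := by
    simp only [LinearMap.sub_apply]
    linarith [hz v, hv z]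
  have h_energy := bilinForm_add_apply_self_le_sub_of_sub_apply_eq hMA h_defect
  by_contra hv_ne
  linarith [hA_nonneg (ι z), hA_pos v hv_ne]

end BilinForm

/-- Abstract form of Lemma 3.5 (injectivity of the adjoint in the symmetric case):
if `v ∈ X` satisfies `b(u,v) = 0` for all `u ∈ V`, then `v = 0`. -/
theorem adjoint_injective_symmetric
    {X : Type*} [NormedAddCommGroup X] [InnerProductSpace ℝ X] [CompleteSpace X]
    {V : Type*} [AddCommGroup V] [Module ℝ V]
    (ι : V →ₗ[ℝ] X) (hι : Function.Injective ι)
    (D : V →ₗ[ℝ] (X →L[ℝ] ℝ))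
    (γ Γ : ℝ) (hγ : 0 < γ) (hγΓ : γ ≤ Γ)
    (A : X →ₗ[ℝ] X →ₗ[ℝ] ℝ)
    (hAbdd : ∀ x y : X, |A x y| ≤ Γ * ‖x‖ * ‖y‖)
    (hAell : ∀ x : X, γ * ‖x‖ ^ 2 ≤ A x x)
    (hAsymm : ∀ x y : X, A x y = A y x)
    (hDpos : ∀ u : V, 0 ≤ D u (ι u))
    (haux : ∀ x : X, ∃ z : V,
      ∀ w : X, D z w + Γ * ⟪ι z, w⟫_ℝ = Γ * ⟪x, w⟫_ℝ)
    (v : X) (hv : ∀ u : V, D u v + A (ι u) v = 0) :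
    v = 0 := by
  have hA_pos (x : X) (hx : x ≠ 0) : 0 < A x x :=
    (mul_pos hγ (pow_pos (norm_pos_iff.2 hx) 2)).trans_le (hAell x)
  have hA_le (x : X) : A x x ≤ (Γ • innerₗ X) x x := by
    calc A x x ≤ Γ * ‖x‖ * ‖x‖ := (le_abs_self _).trans (hAbdd x x)
      _ = Γ * ⟪x, x⟫_ℝ := by rw [real_inner_self_eq_norm_mul_norm, mul_assoc]
  have h_inner_symm : LinearMap.BilinForm.IsSymm (Γ • innerₗ X) :=
    .smul Γ ⟨fun x y ↦ real_inner_comm y x⟩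
  exact adjoint_injective_symmetric_general ι (fun u w ↦ D u w) ⟨hAsymm⟩ hA_pos h_inner_symm
    hA_le hDpos v (haux v) hv
end

section
/- (Induction step in the proof of Theorem 3.8.) Let T : V → X' be a bounded linear bijection satisfying ⟨T u, ι u⟩ ≥ γ ‖ι u‖_X² for all u ∈ V, and let C : X → X' be a bounded linear map with ⟨C x, x⟩ = 0 for all x ∈ X and operator norm ‖C‖_{L(X,X')} ≤ γ/2. Then T + C∘ι : V → X' is a bounded linear bijection and satisfies ⟨(T + C∘ι) u, ι u⟩ ≥ γ ‖ι u‖_X² for all u ∈ V (hence also ‖ι u‖_X ≤ γ⁻¹ ‖(T + C∘ι) u‖_{X'} for all u ∈ V). -/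
/-!
Factor `T + C ∘ ι = (1 + C ∘ ι ∘ T⁻¹) ∘ T`. Coercivity gives `‖ι u‖ ≤ γ⁻¹ ‖T u‖`, so the operator
`C ∘ ι ∘ T⁻¹` on `X'` has norm at most `‖C‖ / γ < 1` and a Neumann series inverts the first factor.
Since `⟨C x, x⟩ ≥ 0`, adding `C ∘ ι` cannot decrease `⟨T u, ι u⟩`, which preserves coercivity with
the same constant.
-/

theorem bijective_add_of_norm_le_mul_norm {𝕜 V F : Type*} [NontriviallyNormedField 𝕜]
    [AddCommGroup V] [Module 𝕜 V] [NormedAddCommGroup F] [NormedSpace 𝕜 F] [CompleteSpace F]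
    {T A : V →ₗ[𝕜] F} (hT : Function.Bijective T) {c : ℝ} (hc : c < 1)
    (hA : ∀ u, ‖A u‖ ≤ c * ‖T u‖) : Function.Bijective (T + A) := by
  let e : V ≃ₗ[𝕜] F := LinearEquiv.ofBijective T hT
  have apply_symm (f : F) : T (e.symm f) = f := e.apply_symm_apply f
  let K : F →L[𝕜] F := (A ∘ₗ e.symm.toLinearMap).mkContinuous c fun f => by
    simpa only [apply_symm, LinearMap.comp_apply, LinearEquiv.coe_coe] using hA (e.symm f)
  have norm_neg_K_lt_one : ‖-K‖ < 1 := by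
    rw [norm_neg]
    exact (LinearMap.mkContinuous_norm_le' _ _).trans_lt (max_lt hc one_pos)
  have bijective_one_add_K : Function.Bijective ⇑(1 + K) := by
    rw [← sub_neg_eq_add]
    exact ContinuousLinearMap.isUnit_iff_bijective.mp
      (isUnit_one_sub_of_norm_lt_one norm_neg_K_lt_one)
  have factorization : ⇑(T + A) = ⇑(1 + K) ∘ T := by
    funext u
    change T u + A u = T u + A (e.symm (e u))
    rw [e.symm_apply_apply]
  rw [factorization]
  exact bijective_one_add_K.comp hT

theorem norm_le_inv_mul_opNorm_of_mul_sq_le_apply {X : Type*} [SeminormedAddCommGroup X]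
    [NormedSpace ℝ X] {γ : ℝ} (hγ : 0 < γ) {f : X →L[ℝ] ℝ} {x : X} (h : γ * ‖x‖ ^ 2 ≤ f x) :
    ‖x‖ ≤ γ⁻¹ * ‖f‖ := by
  rw [le_inv_mul_iff₀ hγ]
  rcases (norm_nonneg x).eq_or_lt with hx | hx
  · simp [← hx]
  · refine le_of_mul_le_mul_right ?_ hx
    calc γ * ‖x‖ * ‖x‖ = γ * ‖x‖ ^ 2 := by ring
      _ ≤ f x := h
      _ ≤ ‖f‖ * ‖x‖ := (Real.le_norm_self _).trans (f.le_opNorm x)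

theorem bijective_add_comp_of_opNorm_lt {X V : Type*} [NormedAddCommGroup X] [NormedSpace ℝ X]
    [AddCommGroup V] [Module ℝ V] (ι : V →ₗ[ℝ] X) {γ : ℝ} {T : V →ₗ[ℝ] (X →L[ℝ] ℝ)}
    (hTbij : Function.Bijective T) (hTcoer : ∀ u, γ * ‖ι u‖ ^ 2 ≤ T u (ι u))
    {C : X →L[ℝ] (X →L[ℝ] ℝ)} (hCnorm : ‖C‖ < γ) :
    Function.Bijective (fun u => T u + C (ι u)) := by
  have hγ : 0 < γ := (norm_nonneg C).trans_lt hCnorm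
  refine bijective_add_of_norm_le_mul_norm (A := C.toLinearMap ∘ₗ ι) hTbij
    ((div_lt_one hγ).mpr hCnorm) fun u => ?_
  calc ‖C (ι u)‖ ≤ ‖C‖ * ‖ι u‖ := C.le_opNorm _
    _ ≤ ‖C‖ * (γ⁻¹ * ‖T u‖) := by
      gcongr
      exact norm_le_inv_mul_opNorm_of_mul_sq_le_apply hγ (hTcoer u)
    _ = ‖C‖ / γ * ‖T u‖ := by rw [div_eq_mul_inv, mul_assoc]

theorem perturbation_induction_step_general {X V : Type*} [NormedAddCommGroup X]
    [NormedSpace ℝ X] [AddCommGroup V] [Module ℝ V] (ι : V →ₗ[ℝ] X) {γ : ℝ}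
    {T : V →ₗ[ℝ] (X →L[ℝ] ℝ)} (hTbij : Function.Bijective T)
    (hTcoer : ∀ u, γ * ‖ι u‖ ^ 2 ≤ T u (ι u))
    {C : X →L[ℝ] (X →L[ℝ] ℝ)} (hC : ∀ x, 0 ≤ C x x) (hCnorm : ‖C‖ < γ) :
    Function.Bijective (fun u => T u + C (ι u)) ∧
      (∀ u, γ * ‖ι u‖ ^ 2 ≤ (T u + C (ι u)) (ι u)) ∧
      (∀ u, ‖ι u‖ ≤ γ⁻¹ * ‖T u + C (ι u)‖) := by
  have hγ : 0 < γ := (norm_nonneg C).trans_lt hCnorm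
  have coercive (u : V) : γ * ‖ι u‖ ^ 2 ≤ (T u + C (ι u)) (ι u) :=
    le_add_of_le_of_nonneg (hTcoer u) (hC (ι u))
  exact ⟨bijective_add_comp_of_opNorm_lt ι hTbij hTcoer hCnorm, coercive,
    fun u => norm_le_inv_mul_opNorm_of_mul_sq_le_apply hγ (coercive u)⟩

/-- Induction step in the proof of Theorem 3.8: if `T : V → X'` is a bounded linear
bijection with `⟨T u, ι u⟩ ≥ γ ‖ι u‖²` and `C : X → X'` is bounded linear,
antisymmetric (`⟨C x, x⟩ = 0`) with `‖C‖ ≤ γ/2`, then `T + C∘ι` is a bijection,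
satisfies the same coercivity bound, and hence `‖ι u‖ ≤ γ⁻¹ ‖(T + C∘ι) u‖`. -/
theorem perturbation_induction_step
    {X : Type*} [NormedAddCommGroup X] [InnerProductSpace ℝ X] [CompleteSpace X]
    {V : Type*} [NormedAddCommGroup V] [NormedSpace ℝ V] [CompleteSpace V]
    (ι : V →L[ℝ] X) (γ : ℝ) (hγ : 0 < γ)
    (T : V →L[ℝ] (X →L[ℝ] ℝ)) (hTbij : Function.Bijective T)
    (hTcoer : ∀ u : V, γ * ‖ι u‖ ^ 2 ≤ T u (ι u))
    (C : X →L[ℝ] (X →L[ℝ] ℝ)) (hC : ∀ x : X, C x x = 0)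
    (hCnorm : ‖C‖ ≤ γ / 2) :
    Function.Bijective (fun u : V => T u + C (ι u)) ∧
      (∀ u : V, γ * ‖ι u‖ ^ 2 ≤ (T u + C (ι u)) (ι u)) ∧
      (∀ u : V, ‖ι u‖ ≤ γ⁻¹ * ‖T u + C (ι u)‖) :=
  perturbation_induction_step_general ι.toLinearMap hTbij hTcoer (fun x => (hC x).ge)
    (hCnorm.trans_lt (half_lt_self hγ))
end

section
/- (Constructive test-function estimate from the proof of Lemma 3.4.) For every u ∈ V there exists v ∈ X with ‖v‖_X ≤ √2·δ·‖u‖_V and b(u, v) ≥ (1/2)‖u‖_V², where δ := (1 + Γ²)/(2γ); note δ ≥ 1 since Γ ≥ γ > 0. (In the paper's proof v = z + δ·ι u, with z ∈ X the Riesz representative of D u ∈ X'.) -/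
open scoped RealInnerProductSpace

/-!
Test with `v = z + δ • ι u`, where `z` is the Riesz representative of `D u`. Then
`⟨D u, z⟩ = ‖D u‖²`, and Young's inequality absorbs the cross term `A (ι u) z` into half of
`‖D u‖²` at the price of `Γ² ‖ι u‖² / 2`. The constant `δ` is chosen so that the coercive term
`δ γ ‖ι u‖² = (1 + Γ²) / 2 * ‖ι u‖²` pays this price and leaves `‖ι u‖² / 2`.
-/

theorem add_le_sqrt_two_mul_sqrt (a b : ℝ) : a + b ≤ √2 * √(a ^ 2 + b ^ 2) := by
  rw [← Real.sqrt_mul zero_le_two]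
  exact Real.le_sqrt_of_sq_le add_sq_le

theorem one_le_one_add_sq_div_two_mul {γ Γ : ℝ} (hγ : 0 < γ) (hγΓ : γ ≤ Γ) :
    1 ≤ (1 + Γ ^ 2) / (2 * γ) := by
  rw [one_le_div (by positivity)]
  calc 2 * γ ≤ 2 * 1 * Γ := by linarith
    _ ≤ 1 ^ 2 + Γ ^ 2 := two_mul_le_add_sq 1 Γ
    _ = 1 + Γ ^ 2 := by rw [one_pow]

theorem toDual_symm_apply_self {𝕜 X : Type*} [RCLike 𝕜] [NormedAddCommGroup X]
    [InnerProductSpace 𝕜 X] [CompleteSpace X] (f : X →L[𝕜] 𝕜) :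
    f ((InnerProductSpace.toDual 𝕜 X).symm f) = (‖f‖ : 𝕜) ^ 2 := by
  rw [← InnerProductSpace.toDual_symm_apply, inner_self_eq_norm_sq_to_K,
    LinearIsometryEquiv.norm_map]

section AddSMul

variable {X : Type*} [SeminormedAddCommGroup X]

theorem norm_add_smul_le_sqrt_two_mul [NormedSpace ℝ X] {δ : ℝ} (hδ : 1 ≤ δ) (x z : X) :
    ‖z + δ • x‖ ≤ √2 * δ * √(‖x‖ ^ 2 + ‖z‖ ^ 2) := by
  have hδ₀ : 0 ≤ δ := zero_le_one.trans hδ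
  calc ‖z + δ • x‖ ≤ ‖z‖ + δ * ‖x‖ := by
        simpa only [norm_smul_of_nonneg hδ₀] using norm_add_le z (δ • x)
    _ ≤ δ * ‖z‖ + δ * ‖x‖ := by gcongr; exact le_mul_of_one_le_left (norm_nonneg z) hδ
    _ = δ * (‖x‖ + ‖z‖) := by ring
    _ ≤ δ * (√2 * √(‖x‖ ^ 2 + ‖z‖ ^ 2)) := by gcongr; exact add_le_sqrt_two_mul_sqrt _ _
    _ = √2 * δ * √(‖x‖ ^ 2 + ‖z‖ ^ 2) := by ring

theorem half_norm_sq_add_norm_sq_le_apply_add_smul [Module ℝ X] (b : X →ₗ[ℝ] ℝ) {x z : X}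
    {γ Γ δ : ℝ} (hδ : 0 ≤ δ) (hδγ : (1 + Γ ^ 2) / 2 ≤ δ * γ)
    (hbx : γ * ‖x‖ ^ 2 ≤ b x) (hbz : ‖z‖ ^ 2 - Γ * ‖x‖ * ‖z‖ ≤ b z) :
    1 / 2 * (‖x‖ ^ 2 + ‖z‖ ^ 2) ≤ b (z + δ • x) := by
  have young : 2 * (Γ * ‖x‖) * ‖z‖ ≤ (Γ * ‖x‖) ^ 2 + ‖z‖ ^ 2 := two_mul_le_add_sq _ _
  calc 1 / 2 * (‖x‖ ^ 2 + ‖z‖ ^ 2)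
      ≤ ‖z‖ ^ 2 - Γ * ‖x‖ * ‖z‖ + (1 + Γ ^ 2) / 2 * ‖x‖ ^ 2 := by linarith
    _ ≤ ‖z‖ ^ 2 - Γ * ‖x‖ * ‖z‖ + δ * γ * ‖x‖ ^ 2 := by gcongr
    _ = ‖z‖ ^ 2 - Γ * ‖x‖ * ‖z‖ + δ * (γ * ‖x‖ ^ 2) := by rw [mul_assoc δ]
    _ ≤ b z + δ * b x := by gcongr
    _ = b (z + δ • x) := by rw [map_add, map_smul, smul_eq_mul]

end AddSMul

/-- `x`, `f` and `g` stand for `ι u`, `D u` and `A (ι u)` at a single `u`. -/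
theorem testfunction_estimate_general
    {X : Type*} [NormedAddCommGroup X] [InnerProductSpace ℝ X] [CompleteSpace X]
    (x : X) (f : X →L[ℝ] ℝ) (g : X →ₗ[ℝ] ℝ) {γ Γ : ℝ} (hγ : 0 < γ) (hγΓ : γ ≤ Γ)
    (hfx : 0 ≤ f x) (hgx : γ * ‖x‖ ^ 2 ≤ g x) (hg : ∀ y, |g y| ≤ Γ * ‖x‖ * ‖y‖) :
    ∃ v : X, ‖v‖ ≤ √2 * ((1 + Γ ^ 2) / (2 * γ)) * √(‖x‖ ^ 2 + ‖f‖ ^ 2) ∧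
      1 / 2 * √(‖x‖ ^ 2 + ‖f‖ ^ 2) ^ 2 ≤ f v + g v := by
  set δ := (1 + Γ ^ 2) / (2 * γ) with hδ_def
  have hδ : 1 ≤ δ := one_le_one_add_sq_div_two_mul hγ hγΓ
  have hδγ : (1 + Γ ^ 2) / 2 = δ * γ := by rw [hδ_def]; field_simp
  set z := (InnerProductSpace.toDual ℝ X).symm f
  have hz : ‖z‖ = ‖f‖ := LinearIsometryEquiv.norm_map _ f
  have hfz : f z = ‖z‖ ^ 2 := by rw [hz]; exact toDual_symm_apply_self f
  rw [Real.sq_sqrt (by positivity), ← hz]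
  refine ⟨z + δ • x, norm_add_smul_le_sqrt_two_mul hδ x z,
    half_norm_sq_add_norm_sq_le_apply_add_smul ((f : X →ₗ[ℝ] ℝ) + g)
      (zero_le_one.trans hδ) hδγ.le ?coercive ?riesz⟩
  case coercive => exact hgx.trans (le_add_of_nonneg_left hfx)
  case riesz =>
    calc ‖z‖ ^ 2 - Γ * ‖x‖ * ‖z‖ ≤ ‖z‖ ^ 2 + g z := by linarith [neg_le_of_abs_le (hg z)]
      _ = f z + g z := by rw [hfz]

/-- Constructive test-function estimate from the proof of Lemma 3.4: for every `u ∈ V`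
there is `v ∈ X` with `‖v‖_X ≤ √2·δ·‖u‖_V` and `b(u,v) ≥ (1/2)‖u‖_V²`,
where `δ = (1 + Γ²)/(2γ)`. -/
theorem testfunction_estimate
    {X : Type*} [NormedAddCommGroup X] [InnerProductSpace ℝ X] [CompleteSpace X]
    {V : Type*} [AddCommGroup V] [Module ℝ V]
    (ι : V →ₗ[ℝ] X) (hι : Function.Injective ι)
    (D : V →ₗ[ℝ] (X →L[ℝ] ℝ))
    (γ Γ : ℝ) (hγ : 0 < γ) (hγΓ : γ ≤ Γ)
    (A : X →ₗ[ℝ] X →ₗ[ℝ] ℝ)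
    (hAbdd : ∀ x y : X, |A x y| ≤ Γ * ‖x‖ * ‖y‖)
    (hAell : ∀ x : X, γ * ‖x‖ ^ 2 ≤ A x x)
    (hDpos : ∀ u : V, 0 ≤ D u (ι u)) :
    ∀ u : V, ∃ v : X,
      ‖v‖ ≤ Real.sqrt 2 * ((1 + Γ ^ 2) / (2 * γ)) *
          Real.sqrt (‖ι u‖ ^ 2 + ‖D u‖ ^ 2) ∧
      (1 / 2) * Real.sqrt (‖ι u‖ ^ 2 + ‖D u‖ ^ 2) ^ 2 ≤ D u v + A (ι u) v := by
  intro u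
  exact testfunction_estimate_general (ι u) (D u) (A (ι u)) hγ hγΓ
    (hDpos u) (hAell (ι u)) (hAbdd (ι u))
end

section
/- (A priori estimate, the bound (3.23)/(3.25) of Theorems 3.6 and 3.8.) If u ∈ V and F ∈ X' satisfy b(u, v) = F(v) for all v ∈ X, then ‖u‖_V ≤ (2·(1 + Γ²)/(√2·γ)) ‖F‖_{X'}. -/
open scoped RealInnerProductSpace

/-!
Testing the equation with `v = ι u` and discarding `⟨D u, ι u⟩ ≥ 0` gives `γ ‖ι u‖ ≤ ‖F‖`.
Solving the equation for `D u` gives `‖D u‖ ≤ ‖F‖ + Γ ‖ι u‖`, hence `γ ‖D u‖ ≤ (γ + Γ) ‖F‖`.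
Together these yield the constant `√(1 + (γ + Γ)²) / γ`, and the stated one is larger because
`1 + (γ + Γ)² ≤ 1 + 4 Γ² ≤ 2 (1 + Γ²)²`.
-/

theorem sqrt_mul_sq_add_mul_sq {c : ℝ} (hc : 0 ≤ c) (a b : ℝ) :
    √((c * a) ^ 2 + (c * b) ^ 2) = c * √(a ^ 2 + b ^ 2) := by
  rw [mul_pow, mul_pow, ← mul_add, Real.sqrt_mul (sq_nonneg c), Real.sqrt_sq hc]

theorem sqrt_one_add_sq_div_le {γ Γ : ℝ} (hγ : 0 < γ) (hγΓ : γ ≤ Γ) :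
    √(1 + (γ + Γ) ^ 2) / γ ≤ 2 * (1 + Γ ^ 2) / (√2 * γ) := by
  have hΓ : 0 < Γ := hγ.trans_le hγΓ
  have radicand_le : 1 + (γ + Γ) ^ 2 ≤ 2 * (1 + Γ ^ 2) ^ 2 :=
    calc 1 + (γ + Γ) ^ 2 ≤ 1 + (Γ + Γ) ^ 2 := by gcongr
      _ ≤ 2 * (1 + Γ ^ 2) ^ 2 := by linarith [sq_nonneg (Γ ^ 2)]
  calc √(1 + (γ + Γ) ^ 2) / γ ≤ √(2 * (1 + Γ ^ 2) ^ 2) / γ := by gcongr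
    _ = √2 * (1 + Γ ^ 2) / γ := by rw [Real.sqrt_mul zero_le_two, Real.sqrt_sq (by positivity)]
    _ = 2 / √2 * (1 + Γ ^ 2) / γ := by rw [Real.div_sqrt]
    _ = 2 * (1 + Γ ^ 2) / (√2 * γ) := by rw [div_mul_eq_mul_div, div_div]

theorem norm_le_norm_add_of_norm_apply_sub_le {𝕜 E G : Type*} [NontriviallyNormedField 𝕜]
    [SeminormedAddCommGroup E] [NormedSpace 𝕜 E] [SeminormedAddCommGroup G] [NormedSpace 𝕜 G]
    {C : ℝ} (hC : 0 ≤ C) {f g : E →L[𝕜] G} (h : ∀ v, ‖f v - g v‖ ≤ C * ‖v‖) : ‖f‖ ≤ ‖g‖ + C :=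
  calc ‖f‖ ≤ ‖g‖ + ‖f - g‖ := norm_le_norm_add_norm_sub' f g
    _ ≤ ‖g‖ + C := by gcongr; exact (f - g).opNorm_le_bound hC h

section

variable {𝕜 E : Type*} [RCLike 𝕜] [SeminormedAddCommGroup E] [NormedSpace 𝕜 E]

theorem mul_norm_le_norm_of_mul_sq_le_re_apply {γ : ℝ} {x : E} {f : StrongDual 𝕜 E}
    (h : γ * ‖x‖ ^ 2 ≤ RCLike.re (f x)) : γ * ‖x‖ ≤ ‖f‖ := by
  rcases (norm_nonneg x).eq_or_lt with hx | hx
  · simp [← hx]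
  · refine le_of_mul_le_mul_right ?_ hx
    calc γ * ‖x‖ * ‖x‖ = γ * ‖x‖ ^ 2 := by ring
      _ ≤ RCLike.re (f x) := h
      _ ≤ ‖f x‖ := RCLike.re_le_norm _
      _ ≤ ‖f‖ * ‖x‖ := f.le_opNorm x

/-- `x`, `d` and `a` stand for `ι u`, `D u` and `A(ι u, ·)`. -/
theorem apriori_estimate_general {γ Γ : ℝ} (hγ : 0 < γ) (hΓ : 0 ≤ Γ) {x : E}
    {d F : StrongDual 𝕜 E} {a : E → 𝕜} (ha_bdd : ∀ v, ‖a v‖ ≤ Γ * ‖x‖ * ‖v‖)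
    (ha_ell : γ * ‖x‖ ^ 2 ≤ RCLike.re (a x)) (hd : 0 ≤ RCLike.re (d x))
    (h : ∀ v, d v + a v = F v) :
    √(‖x‖ ^ 2 + ‖d‖ ^ 2) ≤ √(1 + (γ + Γ) ^ 2) / γ * ‖F‖ := by
  have norm_x_le : γ * ‖x‖ ≤ ‖F‖ :=
    mul_norm_le_norm_of_mul_sq_le_re_apply (by rw [← h, map_add]; linarith)
  have norm_d_le : ‖d‖ ≤ ‖F‖ + Γ * ‖x‖ :=
    norm_le_norm_add_of_norm_apply_sub_le (by positivity) fun v ↦ by simpa [← h] using ha_bdd v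
  have mul_norm_d_le : γ * ‖d‖ ≤ ‖F‖ * (γ + Γ) :=
    calc γ * ‖d‖ ≤ γ * (‖F‖ + Γ * ‖x‖) := by gcongr
      _ = γ * ‖F‖ + Γ * (γ * ‖x‖) := by ring
      _ ≤ γ * ‖F‖ + Γ * ‖F‖ := by gcongr
      _ = ‖F‖ * (γ + Γ) := by ring
  rw [div_mul_eq_mul_div, le_div_iff₀' hγ]
  calc γ * √(‖x‖ ^ 2 + ‖d‖ ^ 2) = √((γ * ‖x‖) ^ 2 + (γ * ‖d‖) ^ 2) :=
        (sqrt_mul_sq_add_mul_sq hγ.le _ _).symm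
    _ ≤ √((‖F‖ * 1) ^ 2 + (‖F‖ * (γ + Γ)) ^ 2) := by rw [mul_one]; gcongr
    _ = √(1 + (γ + Γ) ^ 2) * ‖F‖ := by
        rw [sqrt_mul_sq_add_mul_sq (norm_nonneg F), one_pow, mul_comm]

end

/-- A priori estimate (the bound (3.23)/(3.25) of Theorems 3.6 and 3.8):
if `b(u,v) = F(v)` for all `v ∈ X`, then `‖u‖_V ≤ (2·(1 + Γ²)/(√2·γ)) ‖F‖_{X'}`. -/
theorem apriori_estimate
    {X : Type*} [NormedAddCommGroup X] [InnerProductSpace ℝ X] [CompleteSpace X]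
    {V : Type*} [AddCommGroup V] [Module ℝ V]
    (ι : V →ₗ[ℝ] X) (hι : Function.Injective ι)
    (D : V →ₗ[ℝ] (X →L[ℝ] ℝ))
    (γ Γ : ℝ) (hγ : 0 < γ) (hγΓ : γ ≤ Γ)
    (A : X →ₗ[ℝ] X →ₗ[ℝ] ℝ)
    (hAbdd : ∀ x y : X, |A x y| ≤ Γ * ‖x‖ * ‖y‖)
    (hAell : ∀ x : X, γ * ‖x‖ ^ 2 ≤ A x x)
    (hDpos : ∀ u : V, 0 ≤ D u (ι u))
    (u : V) (F : X →L[ℝ] ℝ)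
    (hu : ∀ v : X, D u v + A (ι u) v = F v) :
    Real.sqrt (‖ι u‖ ^ 2 + ‖D u‖ ^ 2)
      ≤ 2 * (1 + Γ ^ 2) / (Real.sqrt 2 * γ) * ‖F‖ :=
  (apriori_estimate_general hγ (hγ.le.trans hγΓ) (hAbdd (ι u)) (hAell _) (hDpos u) hu).trans
    (mul_le_mul_of_nonneg_right (sqrt_one_add_sq_div_le hγ hγΓ) (norm_nonneg F))
end

section
/- (Cauchy–Schwarz inequality for the gap form, the key estimate in the proof of Lemma 3.5.) For all x, y ∈ X one has Γ·(x, y)_X − a(x, y) ≤ (Γ − γ) ‖x‖_X ‖y‖_X. (This follows by applying the Cauchy–Schwarz inequality to the symmetric positive semi-definite bilinear form (x,y) ↦ Γ·(x, y)_X − a(x, y).) -/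
open scoped InnerProductSpace

/-!
The gap form `Γ⟪·, ·⟫ - a` is positive semi-definite because `a x x ≤ Γ ‖x‖ ^ 2`, and the
lower bound `γ ‖x‖ ^ 2 ≤ a x x` makes it at most `(Γ - γ) ‖x‖ ^ 2` on the diagonal. By
Cauchy–Schwarz for semi-definite forms, a bound on the diagonal is a bound everywhere.
-/

theorem abs_apply_le_of_apply_self_le {M : Type*} [SeminormedAddCommGroup M] [Module ℝ M]
    {B : M →ₗ[ℝ] M →ₗ[ℝ] ℝ} (hB : B.IsPosSemidef) {C : ℝ}
    (hC : ∀ x, B x x ≤ C * ‖x‖ ^ 2) (x y : M) :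
    |B x y| ≤ C * ‖x‖ * ‖y‖ := by
  have bound_nonneg : 0 ≤ C * ‖x‖ * ‖y‖ := by
    rcases (norm_nonneg x).eq_or_lt with hx | hx
    · simp [← hx]
    · have : 0 ≤ C :=
        nonneg_of_mul_nonneg_left ((hB.isNonneg.nonneg x).trans (hC x)) (by positivity)
      positivity
  refine abs_le_of_sq_le_sq ?_ bound_nonneg
  calc
    B x y ^ 2 ≤ B x x * B y y :=
      LinearMap.BilinForm.apply_sq_le_of_symm B hB.isNonneg.nonneg hB.isSymm x y
    _ ≤ (C * ‖x‖ ^ 2) * (C * ‖y‖ ^ 2) :=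
      mul_le_mul (hC x) (hC y) (hB.isNonneg.nonneg y) ((hB.isNonneg.nonneg x).trans (hC x))
    _ = (C * ‖x‖ * ‖y‖) ^ 2 := by ring

section GapForm

variable {X : Type*} [SeminormedAddCommGroup X] [InnerProductSpace ℝ X]

/-- The gap form `(x, y) ↦ Γ⟪x, y⟫ - a x y`, measuring how far the bilinear form `a` lies below
its upper bound `Γ⟪·, ·⟫`. -/
noncomputable def gapForm (Γ : ℝ) (a : X →ₗ[ℝ] X →ₗ[ℝ] ℝ) : X →ₗ[ℝ] X →ₗ[ℝ] ℝ :=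
  Γ • innerₗ X - a

theorem gapForm_apply (Γ : ℝ) (a : X →ₗ[ℝ] X →ₗ[ℝ] ℝ) (x y : X) :
    gapForm Γ a x y = Γ * ⟪x, y⟫_ℝ - a x y :=
  rfl

theorem gapForm_apply_self (Γ : ℝ) (a : X →ₗ[ℝ] X →ₗ[ℝ] ℝ) (x : X) :
    gapForm Γ a x x = Γ * ‖x‖ ^ 2 - a x x := by
  rw [gapForm_apply, real_inner_self_eq_norm_sq]

theorem isPosSemidef_gapForm {Γ : ℝ} {a : X →ₗ[ℝ] X →ₗ[ℝ] ℝ} (hsymm : ∀ x y, a x y = a y x)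
    (hupper : ∀ x, a x x ≤ Γ * ‖x‖ ^ 2) : (gapForm Γ a).IsPosSemidef where
  eq x y := by simp only [gapForm_apply, RingHom.id_apply, real_inner_comm x y, hsymm x y]
  nonneg x := by
    rw [gapForm_apply_self]
    exact sub_nonneg.mpr (hupper x)

theorem gap_form_cauchy_schwarz_general {γ Γ : ℝ} {a : X →ₗ[ℝ] X →ₗ[ℝ] ℝ}
    (hsymm : ∀ x y, a x y = a y x) (hlower : ∀ x, γ * ‖x‖ ^ 2 ≤ a x x)
    (hupper : ∀ x, a x x ≤ Γ * ‖x‖ ^ 2) (x y : X) :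
    |Γ * ⟪x, y⟫_ℝ - a x y| ≤ (Γ - γ) * ‖x‖ * ‖y‖ := by
  have gap_le (z : X) : gapForm Γ a z z ≤ (Γ - γ) * ‖z‖ ^ 2 := by
    rw [gapForm_apply_self, sub_mul]
    exact sub_le_sub_left (hlower z) _
  exact abs_apply_le_of_apply_self_le (isPosSemidef_gapForm hsymm hupper) gap_le x y

end GapForm

/-- Cauchy–Schwarz inequality for the gap form (key estimate in the proof of
Lemma 3.5): `Γ·(x,y)_X − a(x,y) ≤ (Γ − γ) ‖x‖ ‖y‖` for all `x, y ∈ X`. -/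
theorem gap_form_cauchy_schwarz
    {X : Type*} [NormedAddCommGroup X] [InnerProductSpace ℝ X]
    (γ Γ : ℝ) (hγ : 0 < γ) (hγΓ : γ ≤ Γ)
    (a : X →ₗ[ℝ] X →ₗ[ℝ] ℝ)
    (hasymm : ∀ x y : X, a x y = a y x)
    (haell : ∀ x : X, γ * ‖x‖ ^ 2 ≤ a x x)
    (habdd : ∀ x y : X, |a x y| ≤ Γ * ‖x‖ * ‖y‖) :
    ∀ x y : X, Γ * ⟪x, y⟫_ℝ - a x y ≤ (Γ - γ) * ‖x‖ * ‖y‖ := by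
  exact fun x y => le_of_abs_le (gap_form_cauchy_schwarz_general hasymm haell
    (fun z => by simpa only [mul_assoc, sq] using le_of_abs_le (habdd z z)) x y)
end
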